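/- Fix a sequence length L and suppose the state transitions are scalar multiples of the identity: A_t = a_t I with a_t ∈ ℝ, and let B_t, C_t ∈ ℝ^N for 0 ≤ t ≤ L−1. Then the SSM matrix M, defined by M_{ij} = C_iᵀ (A_i ⋯ A_{j+1}) B_j for i ≥ j and 0 otherwise, factors entrywise as M_{ij} = (L_M)_{ij} · (C_iᵀ B_j) for i ≥ j and M_{ij} = 0 for i < j, where (L_M)_{ij} = a_i a_{i−1} ⋯ a_{j+1} (equal to 1 when j = i). Equivalently, M = L_M ∘ (C̃ B̃ᵀ) on and below the diagonal, where C̃ and B̃ are the L × N matrices with rows C_tᵀ and B_tᵀ. -/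

import Mathlib

open Matrix
open scoped Matrix

/-- The ordered matrix product `A_i * A_{i-1} * ⋯ * A_{j+1}`, equal to the identity
matrix when `j = i` (more generally when `i ≤ j`). -/
def transitionProd {N : ℕ} (A : ℕ → Matrix (Fin N) (Fin N) ℝ) (i j : ℕ) :
    Matrix (Fin N) (Fin N) ℝ :=
  (((List.range' (j + 1) (i - j)).reverse).map A).prod

/-- The scalar product `a_i * a_{i-1} * ⋯ * a_{j+1}`, equal to `1` when `j = i`
(more generally when `i ≤ j`). -/
def scalarProd (a : ℕ → ℝ) (i j : ℕ) : ℝ :=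
  ((List.range' (j + 1) (i - j)).map a).prod

theorem list_prod_map_smul_one {ι R S : Type*} [CommSemiring R] [Semiring S] [Algebra R S]
    (a : ι → R) (l : List ι) :
    (l.map fun t => a t • (1 : S)).prod = (l.map a).prod • (1 : S) := by
  simp only [← Algebra.algebraMap_eq_smul_one, map_list_prod, List.map_map, Function.comp_def]

theorem dotProduct_smul_one_mulVec {n R : Type*} [Fintype n] [DecidableEq n] [CommSemiring R]
    (c : R) (v w : n → R) :
    v ⬝ᵥ ((c • (1 : Matrix n n R)) *ᵥ w) = c * (v ⬝ᵥ w) := by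
  rw [smul_mulVec, one_mulVec, dotProduct_smul, smul_eq_mul]

theorem transitionProd_smul_one {N : ℕ} (a : ℕ → ℝ) (i j : ℕ) :
    transitionProd (fun t => a t • (1 : Matrix (Fin N) (Fin N) ℝ)) i j
      = scalarProd a i j • (1 : Matrix (Fin N) (Fin N) ℝ) := by
  rw [transitionProd, scalarProd, list_prod_map_smul_one, List.map_reverse, List.prod_reverse]

/-- When the state transitions are scalar multiples of the identity, `A_t = a_t I`,
the SSM matrix `M` (with `M i j = C_iᵀ (A_i ⋯ A_{j+1}) B_j` for `i ≥ j` and `0`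
otherwise) factors entrywise as `M i j = (L_M) i j * (C_iᵀ B_j)` for `i ≥ j` and
`M i j = 0` for `i < j`, where `(L_M) i j = a_i ⋯ a_{j+1}` (equal to `1` when `j = i`).
Equivalently, `M = L_M ⊙ (C̃ B̃ᵀ)` on and below the diagonal, where `C̃, B̃` are the
`L × N` matrices with rows `C_tᵀ` and `B_tᵀ`. -/
theorem ssm_scalar_mask_factorization {L N : ℕ}
    (a : ℕ → ℝ) (B C : ℕ → Fin N → ℝ)
    (M LM : Matrix (Fin L) (Fin L) ℝ)
    (hM : ∀ i j : Fin L,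
      M i j = if (j : ℕ) ≤ (i : ℕ)
        then C i ⬝ᵥ (transitionProd (fun t => a t • (1 : Matrix (Fin N) (Fin N) ℝ)) i j *ᵥ B j)
        else 0)
    (hLM : ∀ i j : Fin L, LM i j = scalarProd a i j)
    (Ctilde Btilde : Matrix (Fin L) (Fin N) ℝ)
    (hCt : ∀ (t : Fin L) (k : Fin N), Ctilde t k = C t k)
    (hBt : ∀ (t : Fin L) (k : Fin N), Btilde t k = B t k) :
    (∀ i j : Fin L, M i j = if (j : ℕ) ≤ (i : ℕ) then LM i j * (C i ⬝ᵥ B j) else 0) ∧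
      (∀ i j : Fin L, (j : ℕ) ≤ (i : ℕ) → M i j = (LM ⊙ (Ctilde * Btildeᵀ)) i j) := by
  have entry_eq : ∀ i j : Fin L,
      M i j = if (j : ℕ) ≤ (i : ℕ) then LM i j * (C i ⬝ᵥ B j) else 0 := fun i j => by
    rw [hM, hLM, transitionProd_smul_one, dotProduct_smul_one_mulVec]
  have gram_eq : ∀ i j : Fin L, (Ctilde * Btildeᵀ) i j = C i ⬝ᵥ B j := fun i j => by
    simp only [mul_apply, transpose_apply, dotProduct, hCt, hBt]
  refine ⟨entry_eq, fun i j hij => ?_⟩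
  rw [entry_eq, if_pos hij, hadamard_apply, gram_eq]
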